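/- arXiv:1902.03648 — 3 statements merged into one kernel-verified Lean document; each statement's English description precedes it below -/
import Mathlib

section
/- Let H be any finite simple graph on m vertices and let F = P_3 ⊔ K_1 ⊔ H (so F has m+4 vertices). Then there exists a first-order sentence in the language of graphs of quantifier depth at most m+3 = v(F)−1 which expresses the property C[F]; in particular D[F] ≤ v(F)−1. -/
open FirstOrder

/-- Quantifier depth of a first-order (bounded) formula: atomic formulas have
depth 0, binary connectives take the max, and a quantifier adds 1. -/
def FirstOrder.Language.BoundedFormula.qdepth {L : Language} {α : Type*} :
    {n : ℕ} → L.BoundedFormula α n → ℕ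
  | _, .falsum => 0
  | _, .equal _ _ => 0
  | _, .rel _ _ => 0
  | _, .imp f g => max f.qdepth g.qdepth
  | _, .all f => f.qdepth + 1

/-- A sentence of the language of graphs expresses the property `C[F]` of containing an
induced subgraph isomorphic to `F` if it holds in a finite graph `G` iff
there is an induced-subgraph embedding (`↪g`) of `F` into `G`. -/
def Expresses {α : Type} (φ : FirstOrder.Language.graph.Sentence) (F : SimpleGraph α) : Prop :=
  ∀ (V : Type) (_ : Fintype V) (G : SimpleGraph V),
    (letI := G.structure; φ.Realize V) ↔ Nonempty (F ↪g G)

/-!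
Once the copy of `H` is fixed, a copy of `P₃ ⊔ K₁` extends it to a copy of `F` precisely when it
avoids the copy of `H` and all its neighbours. Relativizing a sentence to this set does not change
its depth, so it suffices to express the presence of an induced `P₃ ⊔ K₁` in depth three, although
this graph has four vertices. The sentence asserts that some vertex `x` lies in an independent
triple, and that for some neighbour `y` of `x` there are an induced path `x y z` and a vertex `w`
adjacent to neither `x` nor `y`. If `w` is not adjacent to `z`, these four vertices are the copy.
Otherwise the independent triple either is part of a copy together with `z`, or yields a vertex `r`
adjacent to neither `x` nor `z`, and then there is a copy among `x`, `y`, `z`, `w`, `r`.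
-/

universe u v w

section QuantifierDepth

open Language BoundedFormula

variable {L : Language} {α β : Type*} {n : ℕ}

theorem qdepth_not (φ : L.BoundedFormula α n) : φ.not.qdepth = φ.qdepth :=
  max_eq_left (Nat.zero_le _)

theorem qdepth_inf (φ ψ : L.BoundedFormula α n) :
    (φ ⊓ ψ).qdepth = max φ.qdepth ψ.qdepth := by
  change (φ.imp ψ.not).not.qdepth = _
  rw [qdepth_not, qdepth, qdepth_not]

theorem qdepth_ex (φ : L.BoundedFormula α (n + 1)) : φ.ex.qdepth = φ.qdepth + 1 := by
  rw [BoundedFormula.ex, qdepth_not, qdepth, qdepth_not]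

theorem qdepth_exs (φ : L.BoundedFormula α n) : φ.exs.qdepth = φ.qdepth + n := by
  induction n with
  | zero => rfl
  | succ n ih => rw [exs, ih, qdepth_ex, add_assoc, add_comm 1 n]

theorem qdepth_iInf_le [Finite β] {f : β → L.BoundedFormula α n} {d : ℕ}
    (hf : ∀ b, (f b).qdepth ≤ d) : (BoundedFormula.iInf f).qdepth ≤ d := by
  have foldr_le (bs : List β) : ((bs.map f).foldr (· ⊓ ·) ⊤).qdepth ≤ d := by
    induction bs with
    | nil => exact Nat.zero_le d
    | cons b bs ih => exact (qdepth_inf _ _).trans_le (max_le (hf b) ih)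
  exact foldr_le _

theorem qdepth_castLE {m : ℕ} (h : m ≤ n) (φ : L.BoundedFormula α m) :
    (φ.castLE h).qdepth = φ.qdepth := by
  induction φ generalizing n with
  | falsum | equal | rel => rfl
  | imp φ ψ ihφ ihψ => simp only [castLE, qdepth, ihφ, ihψ]
  | all φ ih => simp only [castLE, qdepth, ih]

theorem qdepth_mapTermRel {L' : Language} {g : ℕ → ℕ}
    {ft : ∀ n, L.Term (α ⊕ Fin n) → L'.Term (β ⊕ Fin (g n))}
    {fr : ∀ n, L.Relations n → L'.Relations n}
    {h : ∀ n, L'.BoundedFormula β (g (n + 1)) → L'.BoundedFormula β (g n + 1)}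
    (hh : ∀ n ψ, (h n ψ).qdepth = ψ.qdepth) (φ : L.BoundedFormula α n) :
    (φ.mapTermRel ft fr h).qdepth = φ.qdepth := by
  induction φ with
  | falsum | equal | rel => rfl
  | imp φ ψ ihφ ihψ => simp only [mapTermRel, qdepth, ihφ, ihψ]
  | all φ ih => simp only [mapTermRel, qdepth, hh, ih]

theorem qdepth_iExs [Finite β] (φ : L.Formula (α ⊕ β)) :
    (φ.iExs β).qdepth = φ.qdepth + Nat.card β := by
  let e := Classical.choice (Classical.choose_spec (Finite.exists_equiv_fin β))
  rw [Formula.iExs, qdepth_exs, relabel, qdepth_mapTermRel fun _ _ => qdepth_castLE _ _,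
    Nat.card_eq_of_equiv_fin e]
  rfl

end QuantifierDepth

section Relativization

open Language BoundedFormula

variable {L : Language} {α M N : Type*} {n : ℕ}

/-- The relativization of a formula without free variables to a guard: every quantifier `∀ x` is
restricted to the `x` satisfying the guard. The guard may have parameters in `α`; `θ n` is the
guard for the variable bound at level `n`, to be read as a condition on the last of its `n + 1`
bound variables. -/
def relativize (θ : ∀ n, L.BoundedFormula α (n + 1)) (φ : L.BoundedFormula Empty n) :
    L.BoundedFormula α n :=
  φ.mapTermRel (fun _ => Term.relabel (Sum.map Empty.elim id)) (fun _ => id) fun n => (θ n).imp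

theorem qdepth_relativize {θ : ∀ n, L.BoundedFormula α (n + 1)} (hθ : ∀ n, (θ n).qdepth = 0)
    (φ : L.BoundedFormula Empty n) : (relativize θ φ).qdepth = φ.qdepth :=
  qdepth_mapTermRel (fun n ψ => by rw [qdepth, hθ, Nat.zero_max]) φ

variable [L.Structure M] [L.Structure N]

theorem realize_relabel_comp_embedding (f : N ↪[L] M) (t : L.Term (Empty ⊕ Fin n)) (v : α → M)
    (xs : Fin n → N) :
    (t.relabel (Sum.map Empty.elim id)).realize (Sum.elim v (f ∘ xs)) =
      f (t.realize (Sum.elim default xs)) := by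
  rw [Term.realize_relabel, ← HomClass.realize_term]
  congr 1
  ext (i | i)
  · exact i.elim
  · rfl

theorem realize_relativize {θ : ∀ n, L.BoundedFormula α (n + 1)} {v : α → M} (f : N ↪[L] M)
    (hθ : ∀ n (xs : Fin (n + 1) → M), (θ n).Realize v xs ↔ xs (Fin.last n) ∈ Set.range f)
    (φ : L.BoundedFormula Empty n) (xs : Fin n → N) :
    (relativize θ φ).Realize v (f ∘ xs) ↔ φ.Realize default xs := by
  induction φ with
  | falsum => rfl
  | equal t₁ t₂ =>
    simp only [relativize, mapTermRel, Realize, realize_relabel_comp_embedding,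
      f.injective.eq_iff]
  | rel R ts =>
    simp only [relativize, mapTermRel, Realize, realize_relabel_comp_embedding]
    exact f.map_rel R _
  | imp φ ψ ihφ ihψ => exact imp_congr (ihφ xs) (ihψ xs)
  | all φ ih =>
    change (∀ a : M, (θ _).Realize v (Fin.snoc (f ∘ xs) a) →
      (relativize θ φ).Realize v (Fin.snoc (f ∘ xs) a)) ↔ ∀ b : N, φ.Realize default (Fin.snoc xs b)
    simp only [hθ, Fin.snoc_last, Set.forall_mem_range, ← ih, Fin.comp_snoc]

end Relativization

section InducedSubgraphs

variable {V : Type u} {U : Type v} {W : Type w}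
  {F : SimpleGraph U} {G : SimpleGraph V} {H : SimpleGraph W}

theorem exists_embedding_coe_eq_iff {f : W → V} :
    (∃ g : H ↪g G, ⇑g = f) ↔
      ∀ a b, (H.Adj a b → G.Adj (f a) (f b)) ∧ (Hᶜ.Adj a b → Gᶜ.Adj (f a) (f b)) := by
  simp only [SimpleGraph.compl_adj]
  constructor
  · rintro ⟨g, rfl⟩ a b
    simp [g.map_adj_iff, g.injective.eq_iff]
  · intro hf
    have hinj : f.Injective := fun a b hab => by
      by_contra hne
      by_cases hadj : H.Adj a b
      · exact ((hf a b).1 hadj).ne hab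
      · exact ((hf a b).2 ⟨hne, hadj⟩).1 hab
    refine ⟨⟨⟨f, hinj⟩, fun {a b} => ⟨fun hG => ?_, (hf a b).1⟩⟩, rfl⟩
    by_contra hadj
    exact ((hf a b).2 ⟨fun hab => hG.ne (congrArg f hab), hadj⟩).2 hG

/-- The vertices of `G` outside the range of `f` with no neighbour in that range. -/
def nonNeighbors (G : SimpleGraph V) (f : W → V) : Set V :=
  {x | ∀ a, Gᶜ.Adj (f a) x}

theorem nonempty_sum_embedding_iff :
    Nonempty (F ⊕g H ↪g G) ↔ ∃ h : H ↪g G, Nonempty (F ↪g G.induce (nonNeighbors G h)) := by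
  constructor
  · rintro ⟨g⟩
    have hmem (a : U) : g (.inl a) ∈ nonNeighbors G (g.comp SimpleGraph.Embedding.sumInr) :=
      fun b => (SimpleGraph.compl_adj ..).2
        ⟨g.injective.ne Sum.inr_ne_inl, fun hadj => by simpa using g.map_adj_iff.1 hadj⟩
    exact ⟨g.comp SimpleGraph.Embedding.sumInr,
      ⟨⟨fun a => ⟨g (.inl a), hmem a⟩, fun a b hab => Sum.inl_injective
        (g.injective (congrArg Subtype.val hab))⟩, g.map_adj_iff⟩⟩
  · rintro ⟨h, ⟨f⟩⟩
    have hcross (a : U) (b : W) : Gᶜ.Adj (h b) (f a) := (f a).2 b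
    refine (exists_embedding_coe_eq_iff (f := Sum.elim (fun a => (f a : V)) h)).2 ?_ |>.nonempty
    rintro (a | a) (b | b)
    · simpa using exists_embedding_coe_eq_iff.1 ⟨(SimpleGraph.Embedding.induce _).comp f, rfl⟩ a b
    · exact ⟨fun hadj => by simp at hadj, fun _ => (hcross a b).symm⟩
    · exact ⟨fun hadj => by simp at hadj, fun _ => hcross b a⟩
    · simp

end InducedSubgraphs

section GraphFormulas

open Language BoundedFormula

variable {V : Type u} {W : Type w} {α : Type*} {n : ℕ}

/-- A graph embedding, as an embedding of structures in the language of graphs. -/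
def structureEmbedding {H : SimpleGraph W} {G : SimpleGraph V} (f : H ↪g G) :
    letI := H.structure
    letI := G.structure
    W ↪[Language.graph] V :=
  letI := H.structure
  letI := G.structure
  { toEmbedding := f.toEmbedding
    map_fun' := fun g => isEmptyElim g
    map_rel' := fun {_} R _ => by cases R; exact f.map_adj_iff }

/-- The formula "`s` and `t` are distinct and not adjacent", i.e. adjacent in the complement. -/
def nonAdjFormula (s t : Language.graph.Term (α ⊕ Fin n)) : Language.graph.BoundedFormula α n :=
  ∼(s =' t) ⊓ ∼(adj.boundedFormula₂ s t)

theorem realize_adj {G : SimpleGraph V} {s t : Language.graph.Term (α ⊕ Fin n)} {v : α → V}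
    {xs : Fin n → V} :
    letI := G.structure
    (adj.boundedFormula₂ s t).Realize v xs ↔
      G.Adj (s.realize (Sum.elim v xs)) (t.realize (Sum.elim v xs)) :=
  Iff.rfl

theorem realize_nonAdjFormula {G : SimpleGraph V} {s t : Language.graph.Term (α ⊕ Fin n)}
    {v : α → V} {xs : Fin n → V} :
    letI := G.structure
    (nonAdjFormula s t).Realize v xs ↔
      Gᶜ.Adj (s.realize (Sum.elim v xs)) (t.realize (Sum.elim v xs)) := by
  let := G.structure
  simp only [nonAdjFormula, realize_inf, realize_not, realize_bdEqual, realize_adj,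
    SimpleGraph.compl_adj]

open scoped Classical in
/-- The diagram of `H`: the free variables indexed by the vertices of `H` form an induced copy of
`H`. -/
noncomputable def diagram [Finite W] (H : SimpleGraph W) : Language.graph.Formula (α ⊕ W) :=
  BoundedFormula.iInf fun p : W × W =>
    if H.Adj p.1 p.2 then adj.boundedFormula₂ (.var (.inl (.inr p.1))) (.var (.inl (.inr p.2)))
    else if p.1 = p.2 then ⊤
    else nonAdjFormula (.var (.inl (.inr p.1))) (.var (.inl (.inr p.2)))

theorem qdepth_diagram [Finite W] (H : SimpleGraph W) : (diagram (α := α) H).qdepth = 0 :=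
  Nat.le_zero.1 <| qdepth_iInf_le fun _ => by split_ifs <;> exact le_rfl

theorem realize_diagram [Finite W] {H : SimpleGraph W} {G : SimpleGraph V} {v : α → V}
    {f : W → V} :
    letI := G.structure
    (diagram H).Realize (Sum.elim v f) ↔ ∃ g : H ↪g G, ⇑g = f := by
  let := G.structure
  rw [exists_embedding_coe_eq_iff, diagram, Formula.Realize, realize_iInf, Prod.forall]
  refine forall₂_congr fun a b => ?_
  split_ifs with hadj heq
  · refine realize_adj.trans ?_
    simp_all
  · simp_all
  · refine realize_nonAdjFormula.trans ?_
    simp_all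

/-- The guard for `relativize` stating that the last bound variable lies in `nonNeighbors` of the
free variables indexed by `W`. -/
noncomputable def nonNeighborGuard (W : Type w) [Finite W] (n : ℕ) :
    Language.graph.BoundedFormula (α ⊕ W) (n + 1) :=
  BoundedFormula.iInf fun a : W => nonAdjFormula (.var (.inl (.inr a))) (.var (.inr (Fin.last n)))

theorem qdepth_nonNeighborGuard [Finite W] (n : ℕ) :
    (nonNeighborGuard (α := α) W n).qdepth = 0 :=
  Nat.le_zero.1 <| qdepth_iInf_le fun _ => le_rfl

theorem realize_nonNeighborGuard [Finite W] {G : SimpleGraph V} {v : α → V} {f : W → V}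
    {xs : Fin (n + 1) → V} :
    letI := G.structure
    (nonNeighborGuard W n).Realize (Sum.elim v f) xs ↔ xs (Fin.last n) ∈ nonNeighbors G f := by
  let := G.structure
  simp only [nonNeighborGuard, realize_iInf, realize_nonAdjFormula]
  rfl

end GraphFormulas

section DisjointUnion

open Language BoundedFormula

variable {U : Type v} {W : Type w} [Finite W]

/-- `φ` holds in exactly those graphs, finite or infinite, that contain an induced copy of `F`. -/
def Detects (φ : Language.graph.Sentence) (F : SimpleGraph U) : Prop :=
  ∀ (V : Type u) (G : SimpleGraph V), (letI := G.structure; V ⊨ φ) ↔ Nonempty (F ↪g G)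

/-- The sentence stating that there is an induced copy of `H` such that `φ` holds in the subgraph
induced on the vertices outside the copy and not adjacent to it. -/
noncomputable def awayFromCopy (H : SimpleGraph W) (φ : Language.graph.Sentence) :
    Language.graph.Sentence :=
  (diagram H ⊓ relativize (nonNeighborGuard W) φ : Language.graph.Formula (Empty ⊕ W)).iExs W

theorem qdepth_awayFromCopy (H : SimpleGraph W) (φ : Language.graph.Sentence) :
    (awayFromCopy H φ).qdepth = φ.qdepth + Nat.card W := by
  rw [awayFromCopy, qdepth_iExs, qdepth_inf, qdepth_diagram,
    qdepth_relativize qdepth_nonNeighborGuard, Nat.zero_max]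

theorem realize_awayFromCopy {V : Type u} (G : SimpleGraph V) (H : SimpleGraph W)
    (φ : Language.graph.Sentence) :
    (letI := G.structure; V ⊨ awayFromCopy H φ) ↔
      ∃ h : H ↪g G, letI := (G.induce (nonNeighbors G h)).structure; nonNeighbors G h ⊨ φ := by
  let := G.structure
  have hrel (h : H ↪g G) : (relativize (nonNeighborGuard W) φ).Realize
      (Sum.elim (default : Empty → V) h) (default : Fin 0 → V) ↔
      letI := (G.induce (nonNeighbors G h)).structure; nonNeighbors G h ⊨ φ := by
    let := (G.induce (nonNeighbors G h)).structure
    let ι := structureEmbedding (SimpleGraph.Embedding.induce (G := G) (nonNeighbors G h))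
    rw [Subsingleton.elim (default : Fin 0 → V) (ι ∘ default)]
    refine realize_relativize ι (fun n xs => (realize_nonNeighborGuard (W := W)).trans ?_) φ default
    exact (Set.ext_iff.1 Subtype.range_coe _).symm
  rw [awayFromCopy, Sentence.Realize, Formula.realize_iExs]
  simp only [Formula.realize_inf, realize_diagram]
  constructor
  · rintro ⟨_, ⟨h, rfl⟩, hφ⟩
    exact ⟨h, (hrel h).1 hφ⟩
  · rintro ⟨h, hφ⟩
    exact ⟨h, ⟨h, rfl⟩, (hrel h).2 hφ⟩

theorem Detects.awayFromCopy {F : SimpleGraph U} {φ : Language.graph.Sentence}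
    (hφ : Detects.{u} φ F) (H : SimpleGraph W) : Detects.{u} (awayFromCopy H φ) (F ⊕g H) :=
  fun _ G => (realize_awayFromCopy G H φ).trans <|
    (exists_congr fun _ => hφ _ _).trans nonempty_sum_embedding_iff.symm

end DisjointUnion

section PathWithPoint

open Language BoundedFormula

variable {V : Type u} {G : SimpleGraph V}

/-- The vertices `x, y, z, w` induce a copy of `P₃ ⊔ K₁` in `G`, with path `x y z`. -/
structure IsInducedPathWithPoint (G : SimpleGraph V) (x y z w : V) : Prop where
  adj_xy : G.Adj x y
  adj_yz : G.Adj y z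
  nonadj_xz : Gᶜ.Adj x z
  nonadj_xw : Gᶜ.Adj x w
  nonadj_yw : Gᶜ.Adj y w
  nonadj_zw : Gᶜ.Adj z w

theorem nonempty_pathWithPoint_embedding_iff :
    Nonempty (SimpleGraph.pathGraph 3 ⊕g (⊥ : SimpleGraph (Fin 1)) ↪g G) ↔
      ∃ x y z w, IsInducedPathWithPoint G x y z w := by
  constructor
  · rintro ⟨g⟩
    have hg := exists_embedding_coe_eq_iff.1 ⟨g, rfl⟩
    refine ⟨g (.inl 0), g (.inl 1), g (.inl 2), g (.inr 0), (hg _ _).1 ?_, (hg _ _).1 ?_,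
      (hg _ _).2 ?_, (hg _ _).2 ?_, (hg _ _).2 ?_, (hg _ _).2 ?_⟩ <;>
    simp [SimpleGraph.pathGraph_adj]
  · rintro ⟨x, y, z, w, hxy, hyz, hxz, hxw, hyw, hzw⟩
    refine (exists_embedding_coe_eq_iff (f := Sum.elim ![x, y, z] ![w])).2 ?_ |>.nonempty
    rintro (a | a) (b | b) <;> fin_cases a <;> fin_cases b <;>
      simp_all [SimpleGraph.pathGraph_adj, SimpleGraph.adj_comm, eq_comm]

theorem exists_common_nonneighbor (hfree : ∀ x y z w, ¬ IsInducedPathWithPoint G x y z w)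
    {x z p q : V} (hxz : Gᶜ.Adj x z) (hxp : Gᶜ.Adj x p) (hxq : Gᶜ.Adj x q) (hpq : Gᶜ.Adj p q) :
    ∃ r, Gᶜ.Adj x r ∧ Gᶜ.Adj z r := by
  by_contra! hno
  have hzp : G.Adj z p := by
    have hne : z ≠ p := fun h => hno q hxq (h ▸ hpq)
    simpa [hne] using hno p hxp
  have hzq : G.Adj z q := by
    have hne : z ≠ q := fun h => hno p hxp (h ▸ hpq.symm)
    simpa [hne] using hno q hxq
  exact hfree p z q x ⟨hzp.symm, hzq, hpq, hxp.symm, hxz.symm, hxq.symm⟩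

theorem exists_isInducedPathWithPoint {x y z w p q : V} (hxp : Gᶜ.Adj x p) (hxq : Gᶜ.Adj x q)
    (hpq : Gᶜ.Adj p q) (hxy : G.Adj x y) (hxz : Gᶜ.Adj x z) (hyz : G.Adj y z)
    (hxw : Gᶜ.Adj x w) (hyw : Gᶜ.Adj y w) : ∃ a b c d, IsInducedPathWithPoint G a b c d := by
  by_contra! hfree
  obtain ⟨r, hxr, hzr⟩ := exists_common_nonneighbor hfree hxz hxp hxq hpq
  have adj_or_nonadj {a b : V} (hab : a ≠ b) : G.Adj a b ∨ Gᶜ.Adj a b := by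
    simpa [hab] using em (G.Adj a b)
  have hzw : G.Adj z w := by
    have hne : z ≠ w := by rintro rfl; exact hyw.2 hyz
    exact (adj_or_nonadj hne).resolve_right fun hzw =>
      hfree x y z w ⟨hxy, hyz, hxz, hxw, hyw, hzw⟩
  have hwr : Gᶜ.Adj w r := by
    have hne : w ≠ r := by rintro rfl; exact hzr.2 hzw
    exact (adj_or_nonadj hne).resolve_left fun hwr =>
      hfree z w r x ⟨hzw, hwr, hzr, hxz.symm, hxw.symm, hxr.symm⟩
  have hyr : Gᶜ.Adj y r := by
    have hne : y ≠ r := by rintro rfl; exact hxr.2 hxy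
    exact (adj_or_nonadj hne).resolve_left fun hyr =>
      hfree x y r w ⟨hxy, hyr, hxr, hxw, hyw, hwr.symm⟩
  exact hfree x y z r ⟨hxy, hyz, hxz, hxr, hyr, hzr⟩

/-- A sentence of depth three for the presence of an induced `P₃ ⊔ K₁`: some `x` lies in an
independent triple, and for some neighbour `y` of `x` there is an induced path `x y z` as well as a
vertex `w` adjacent to neither `x` nor `y`. The variables `&0`, `&1` are `x`, `y` (or the second
vertex of the triple), and `&2` is the innermost one. -/
def pathWithPointSentence : Language.graph.Sentence :=
  ∃' ((∃' (nonAdjFormula &0 &1 ⊓ ∃' (nonAdjFormula &0 &2 ⊓ nonAdjFormula &1 &2))) ⊓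
    ∃' (adj.boundedFormula₂ &0 &1 ⊓
      (∃' (nonAdjFormula &0 &2 ⊓ adj.boundedFormula₂ &1 &2) ⊓
        ∃' (nonAdjFormula &0 &2 ⊓ nonAdjFormula &1 &2))))

theorem qdepth_pathWithPointSentence : pathWithPointSentence.qdepth = 3 :=
  rfl

theorem realize_pathWithPointSentence :
    (letI := G.structure; V ⊨ pathWithPointSentence) ↔
      ∃ x, (∃ p, Gᶜ.Adj x p ∧ ∃ q, Gᶜ.Adj x q ∧ Gᶜ.Adj p q) ∧
        ∃ y, G.Adj x y ∧ (∃ z, Gᶜ.Adj x z ∧ G.Adj y z) ∧ ∃ w, Gᶜ.Adj x w ∧ Gᶜ.Adj y w := by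
  let := G.structure
  simp only [pathWithPointSentence, Sentence.Realize, Formula.Realize, realize_ex, realize_inf,
    realize_adj, realize_nonAdjFormula]
  rfl

theorem detects_pathWithPointSentence :
    Detects.{u} pathWithPointSentence (SimpleGraph.pathGraph 3 ⊕g (⊥ : SimpleGraph (Fin 1))) := by
  intro V G
  rw [realize_pathWithPointSentence, nonempty_pathWithPoint_embedding_iff]
  constructor
  · rintro ⟨x, ⟨p, hxp, q, hxq, hpq⟩, y, hxy, ⟨z, hxz, hyz⟩, w, hxw, hyw⟩
    exact exists_isInducedPathWithPoint hxp hxq hpq hxy hxz hyz hxw hyw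
  · rintro ⟨x, y, z, w, hxy, hyz, hxz, hxw, hyw, hzw⟩
    exact ⟨x, ⟨z, hxz, w, hxw, hzw⟩, y, hxy, ⟨z, hxz, hyz⟩, w, hxw, hyw⟩

end PathWithPoint

theorem exists_shallow_sentence_expressing_general {W : Type w} [Finite W] (H : SimpleGraph W) :
    ∃ φ : Language.graph.Sentence, φ.qdepth ≤ Nat.card W + 3 ∧
      Detects.{u} φ ((SimpleGraph.pathGraph 3 ⊕g (⊥ : SimpleGraph (Fin 1))) ⊕g H) :=
  ⟨awayFromCopy H pathWithPointSentence,
    by rw [qdepth_awayFromCopy, qdepth_pathWithPointSentence, add_comm],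
    detects_pathWithPointSentence.awayFromCopy H⟩

/-- For any finite graph `H` on `m` vertices and `F = P₃ ⊔ K₁ ⊔ H`,
there is a first-order sentence of quantifier depth at most `m + 3 = v(F) - 1`
expressing the property of containing an induced subgraph isomorphic to `F`. -/
theorem exists_shallow_sentence_expressing (m : ℕ) (H : SimpleGraph (Fin m)) :
    ∃ φ : Language.graph.Sentence, φ.qdepth ≤ m + 3 ∧
      Expresses φ ((SimpleGraph.pathGraph 3 ⊕g (⊥ : SimpleGraph (Fin 1))) ⊕g H) := by
  obtain ⟨φ, hdepth, hφ⟩ := exists_shallow_sentence_expressing_general H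
  exact ⟨φ, by rwa [Nat.card_fin] at hdepth, fun V _ G => hφ V G⟩
end

section
/- Let m be a positive integer and F = P_3 ⊔ mK_1 (so F has m+3 vertices). Then D[F] = m+2 = v(F)−1; that is, there is a first-order sentence of quantifier depth m+2 expressing C[F], and no first-order sentence of quantifier depth at most m+1 expresses C[F]. -/
open FirstOrder

/-!
The rook's graph `Kₙ □ Kₙ` contains an induced `P₃ ⊔ mK₁` if `n = m + 2`, but not if `n = m + 1`,
because an independent set has at most one vertex in each row while `P₃ ⊔ mK₁` has `m + 2`
independent vertices. A sentence of quantifier depth `m + 1` cannot tell these two graphs apart: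
Duplicator survives `m + 1` rounds by preserving which of the chosen vertices share a row and which
share a column, since there is always an unused row and an unused column left.

Conversely, `G` contains `F ⊔ K₁` if and only if the graph induced on the non-neighbours of some
vertex contains `F`, so each isolated vertex costs one quantifier, and it remains to express
`C[P₃ ⊔ K₁]` with depth 3. In the complement, being free of `P₃ ⊔ K₁` means that every neighbourhood
is complete multipartite. When that holds, a vertex `x` of a triangle has the same neighbours as
each non-neighbour `y` at distance two from it; when it fails, some such `x` and `y` have different
neighbours.
-/

namespace InducedSubgraphDepth

open FirstOrder.Language SimpleGraph

/-! ### Back-and-forth systems of bounded length -/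

section BackAndForth

variable {L : Language} {M N : Type*} [L.Structure M] [L.Structure N]

/-- A strategy for Duplicator in the `d`-round Ehrenfeucht–Fraïssé game on `M` and `N`: the
relation `R` between tuples is the set of winning positions, the length of the tuples being the
number of rounds already played. -/
structure IsBackAndForth (L : Language) {M N : Type*} [L.Structure M] [L.Structure N] (d : ℕ)
    (R : ∀ ⦃n : ℕ⦄, (Fin n → M) → (Fin n → N) → Prop) : Prop where
  realize_atomic : ∀ ⦃n⦄ {xs : Fin n → M} {ys : Fin n → N}, R xs ys →
    ∀ φ : L.BoundedFormula Empty n, φ.IsAtomic → (φ.Realize default xs ↔ φ.Realize default ys)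
  forth : ∀ ⦃n⦄ {xs : Fin n → M} {ys : Fin n → N}, R xs ys → n < d →
    ∀ x, ∃ y, R (Fin.snoc xs x : Fin (n + 1) → M) (Fin.snoc ys y : Fin (n + 1) → N)
  back : ∀ ⦃n⦄ {xs : Fin n → M} {ys : Fin n → N}, R xs ys → n < d →
    ∀ y, ∃ x, R (Fin.snoc xs x : Fin (n + 1) → M) (Fin.snoc ys y : Fin (n + 1) → N)

theorem IsBackAndForth.realize_iff {d : ℕ} {R : ∀ ⦃n : ℕ⦄, (Fin n → M) → (Fin n → N) → Prop}
    (hR : IsBackAndForth L d R) {n : ℕ} (φ : L.BoundedFormula Empty n) {xs : Fin n → M}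
    {ys : Fin n → N} (h : R xs ys) (hφ : n + φ.qdepth ≤ d) :
    φ.Realize default xs ↔ φ.Realize default ys := by
  induction φ with
  | falsum => exact Iff.rfl
  | equal t₁ t₂ => exact hR.realize_atomic h _ (.equal t₁ t₂)
  | rel r ts => exact hR.realize_atomic h _ (.rel r ts)
  | imp φ ψ ihφ ihψ =>
    simp only [BoundedFormula.qdepth] at hφ
    exact imp_congr (ihφ h (by omega)) (ihψ h (by omega))
  | all φ ih =>
    simp only [BoundedFormula.qdepth] at hφ
    constructor
    · intro hx y
      obtain ⟨x, hxy⟩ := hR.back h (by omega) y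
      exact (ih hxy (by omega)).1 (hx x)
    · intro hy x
      obtain ⟨y, hxy⟩ := hR.forth h (by omega) x
      exact (ih hxy (by omega)).2 (hy y)

end BackAndForth

theorem realize_graph_atomic_iff {V W : Type*} {G : SimpleGraph V} {H : SimpleGraph W} {n : ℕ}
    {xs : Fin n → V} {ys : Fin n → W} (heq : ∀ i j, xs i = xs j ↔ ys i = ys j)
    (hadj : ∀ i j, G.Adj (xs i) (xs j) ↔ H.Adj (ys i) (ys j))
    (φ : Language.graph.BoundedFormula Empty n) (hφ : φ.IsAtomic) :
    (letI := G.structure; φ.Realize default xs) ↔ (letI := H.structure; φ.Realize default ys) := by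
  have eq_var : ∀ t : Language.graph.Term (Empty ⊕ Fin n), ∃ i, t = .var (.inr i) := by
    rintro ((e | i) | ⟨f, -⟩)
    exacts [e.elim, ⟨i, rfl⟩, isEmptyElim f]
  choose var hvar using eq_var
  cases hφ with
  | equal t₁ t₂ =>
    rw [hvar t₁, hvar t₂]
    exact heq _ _
  | rel r ts =>
    cases r
    rw [show ts = fun i => .var (.inr (var (ts i))) from funext fun i => hvar (ts i)]
    exact hadj _ _

/-! ### Rook's graphs -/

section RookGraph

/-- The rook's graph `K_A □ K_B`, whose cliques are the sets contained in a row or a column. -/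
abbrev rookGraph (A B : Type*) : SimpleGraph (A × B) := (⊤ : SimpleGraph A) □ (⊤ : SimpleGraph B)

theorem rookGraph_adj {A B : Type*} {x y : A × B} :
    (rookGraph A B).Adj x y ↔ ¬(x.1 = y.1 ↔ x.2 = y.2) := by
  simp only [boxProd_adj, top_adj]
  tauto

theorem not_surjective_of_lt_card {α : Type*} [Fintype α] {n : ℕ} (h : n < Fintype.card α)
    (f : Fin n → α) : ¬f.Surjective := fun hf =>
  h.not_ge ((Fintype.card_le_of_surjective f hf).trans_eq (Fintype.card_fin n))

theorem exists_ker_snoc_eq {α β : Type*} {n : ℕ} {xs : Fin n → α} {ys : Fin n → β}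
    (h : Setoid.ker xs = Setoid.ker ys) (hys : ¬ys.Surjective) (x : α) :
    ∃ y, Setoid.ker (Fin.snoc xs x : Fin (n + 1) → α) =
      Setoid.ker (Fin.snoc ys y : Fin (n + 1) → β) := by
  simp only [Setoid.ext_iff, Setoid.ker_def] at h
  obtain ⟨y, hy⟩ : ∃ y, ∀ i, xs i = x ↔ ys i = y := by
    by_cases hx : ∃ j, xs j = x
    · obtain ⟨j, rfl⟩ := hx
      exact ⟨ys j, fun i => h i j⟩
    · obtain ⟨y, hy⟩ := not_forall.1 hys
      exact ⟨y, fun i => iff_of_false (not_exists.1 hx i) (not_exists.1 hy i)⟩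
  refine ⟨y, Setoid.ext fun i j => ?_⟩
  simp only [Setoid.ker_def]
  induction i using Fin.lastCases <;> induction j using Fin.lastCases <;>
    simp [h, hy, eq_comm (a := x), eq_comm (a := y)]

variable {A B C D : Type*} [Fintype A] [Fintype B] [Fintype C] [Fintype D]

theorem rookGraph_isBackAndForth {d : ℕ} (hA : d ≤ Fintype.card A) (hB : d ≤ Fintype.card B)
    (hC : d ≤ Fintype.card C) (hD : d ≤ Fintype.card D) :
    letI := (rookGraph A B).structure
    letI := (rookGraph C D).structure
    IsBackAndForth Language.graph d fun n (xs : Fin n → A × B) (ys : Fin n → C × D) =>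
      Setoid.ker (Prod.fst ∘ xs) = Setoid.ker (Prod.fst ∘ ys) ∧
        Setoid.ker (Prod.snd ∘ xs) = Setoid.ker (Prod.snd ∘ ys) := by
  let := (rookGraph A B).structure
  let := (rookGraph C D).structure
  refine ⟨?_, ?_, ?_⟩
  · rintro n xs ys ⟨hfst, hsnd⟩
    simp only [Setoid.ext_iff, Setoid.ker_def, Function.comp_apply] at hfst hsnd
    refine realize_graph_atomic_iff (fun i j => ?_) (fun i j => ?_)
    · rw [Prod.ext_iff, Prod.ext_iff, hfst, hsnd]
    · rw [rookGraph_adj, rookGraph_adj, hfst, hsnd]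
  · rintro n xs ys ⟨hfst, hsnd⟩ hn x
    obtain ⟨a, ha⟩ := exists_ker_snoc_eq hfst (not_surjective_of_lt_card (hn.trans_le hC) _) x.1
    obtain ⟨b, hb⟩ := exists_ker_snoc_eq hsnd (not_surjective_of_lt_card (hn.trans_le hD) _) x.2
    refine ⟨(a, b), ?_⟩
    simp only [Fin.comp_snoc]
    exact ⟨ha, hb⟩
  · rintro n xs ys ⟨hfst, hsnd⟩ hn y
    obtain ⟨a, ha⟩ :=
      exists_ker_snoc_eq hfst.symm (not_surjective_of_lt_card (hn.trans_le hA) _) y.1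
    obtain ⟨b, hb⟩ :=
      exists_ker_snoc_eq hsnd.symm (not_surjective_of_lt_card (hn.trans_le hB) _) y.2
    refine ⟨(a, b), ?_⟩
    simp only [Fin.comp_snoc]
    exact ⟨ha.symm, hb.symm⟩

theorem rookGraph_realize_iff (φ : Language.graph.Sentence) (hA : φ.qdepth ≤ Fintype.card A)
    (hB : φ.qdepth ≤ Fintype.card B) (hC : φ.qdepth ≤ Fintype.card C)
    (hD : φ.qdepth ≤ Fintype.card D) :
    (letI := (rookGraph A B).structure; φ.Realize (A × B)) ↔
      (letI := (rookGraph C D).structure; φ.Realize (C × D)) := by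
  let := (rookGraph A B).structure
  let := (rookGraph C D).structure
  exact (rookGraph_isBackAndForth hA hB hC hD).realize_iff φ
    ⟨Setoid.ext fun i => i.elim0, Setoid.ext fun i => i.elim0⟩ (Nat.zero_add _).le

end RookGraph

theorem fst_injective_of_bot_embedding {ι A B : Type*}
    (f : (⊥ : SimpleGraph ι) ↪g rookGraph A B) : Function.Injective fun i => (f i).1 := by
  intro i j hij
  by_contra hne
  have hadj : (rookGraph A B).Adj (f i) (f j) :=
    rookGraph_adj.2 fun h => hne (f.injective (Prod.ext hij (h.1 hij)))
  exact f.map_adj_iff.1 hadj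

theorem bot_sum_bot {α β : Type*} :
    (⊥ : SimpleGraph α) ⊕g (⊥ : SimpleGraph β) = ⊥ := by
  ext (a | a) (b | b) <;> simp

theorem not_nonempty_pathGraph_three_sum_bot_embedding_rookGraph (m : ℕ) (B : Type*) :
    ¬Nonempty (pathGraph 3 ⊕g (⊥ : SimpleGraph (Fin m)) ↪g rookGraph (Fin (m + 1)) B) := by
  rintro ⟨f⟩
  let ends : (⊥ : SimpleGraph (Fin 2)) ↪g pathGraph 3 :=
    ⟨⟨![0, 2], by decide⟩, by simp [Fin.forall_fin_two, pathGraph_adj]⟩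
  have h := (ends.sum (.refl (G := (⊥ : SimpleGraph (Fin m))))).trans f
  rw [bot_sum_bot] at h
  have hcard := Fintype.card_le_of_injective _ (fst_injective_of_bot_embedding h)
  simp only [Fintype.card_sum, Fintype.card_fin] at hcard
  omega

theorem nonempty_pathGraph_three_sum_bot_embedding_rookGraph (ι : Type*) :
    Nonempty (pathGraph 3 ⊕g (⊥ : SimpleGraph ι) ↪g rookGraph (Fin 2 ⊕ ι) (Fin 2 ⊕ ι)) := by
  let f : Fin 3 ⊕ ι → (Fin 2 ⊕ ι) × (Fin 2 ⊕ ι) :=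
    Sum.elim ![(.inl 0, .inl 0), (.inl 0, .inl 1), (.inl 1, .inl 1)] fun i => (.inr i, .inr i)
  have hinj : f.Injective := by
    rintro (i | i) (j | j) h
    · fin_cases i <;> fin_cases j <;> simp [f] at h ⊢
    · fin_cases i <;> simp [f] at h
    · fin_cases j <;> simp [f] at h
    · simpa [f] using h
  have hadj (x y : Fin 3 ⊕ ι) : (rookGraph (Fin 2 ⊕ ι) (Fin 2 ⊕ ι)).Adj (f x) (f y) ↔
      (pathGraph 3 ⊕g (⊥ : SimpleGraph ι)).Adj x y := by
    rcases x with i | i <;> rcases y with j | j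
    · fin_cases i <;> fin_cases j <;> simp [f, pathGraph_adj]
    · fin_cases i <;> simp [f]
    · fin_cases j <;> simp [f]
    · simp [f]
  exact ⟨⟨f, hinj⟩, hadj _ _⟩

theorem not_expresses_pathGraph_three_sum_bot (m : ℕ) (φ : Language.graph.Sentence)
    (hφ : φ.qdepth ≤ m + 1) : ¬Expresses φ (pathGraph 3 ⊕g (⊥ : SimpleGraph (Fin m))) := by
  intro h
  have hcard : φ.qdepth ≤ Fintype.card (Fin 2 ⊕ Fin m) := by
    simp only [Fintype.card_sum, Fintype.card_fin]
    omega
  have hcard' : φ.qdepth ≤ Fintype.card (Fin (m + 1)) := by rwa [Fintype.card_fin]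
  have hiff := rookGraph_realize_iff φ hcard hcard hcard' hcard'
  rw [h _ inferInstance, h _ inferInstance] at hiff
  exact not_nonempty_pathGraph_three_sum_bot_embedding_rookGraph m _
    (hiff.1 (nonempty_pathGraph_three_sum_bot_embedding_rookGraph _))

/-! ### Adding an isolated vertex costs one quantifier -/

section Relativization

variable {α : Type*} {n : ℕ}

/-- The formula saying that two bound variables are distinct and nonadjacent, that is, adjacent in
the complement graph. -/
def coAdj (i j : Fin n) : Language.graph.BoundedFormula α n :=
  ∼(&i =' &j) ⊓ ∼(adj.boundedFormula₂ (&i) (&j))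

theorem qdepth_coAdj (i j : Fin n) :
    (coAdj i j : Language.graph.BoundedFormula α n).qdepth = 0 := rfl

theorem realize_coAdj {V : Type*} {G : SimpleGraph V} {u : α → V} {xs : Fin n → V} {i j : Fin n} :
    (letI := G.structure; (coAdj i j).Realize u xs) ↔ Gᶜ.Adj (xs i) (xs j) := by
  let := G.structure
  simp only [coAdj, BoundedFormula.realize_inf, BoundedFormula.realize_not,
    BoundedFormula.realize_bdEqual, BoundedFormula.realize_rel₂, compl_adj]
  rfl

/-- The relativization of a formula to the set of vertices other than and nonadjacent to the vertex
named by a new bound variable, which is put in front of the others. -/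
def relativize : {n : ℕ} → Language.graph.BoundedFormula α n →
    Language.graph.BoundedFormula α (n + 1)
  | _, .falsum => .falsum
  | _, .equal t₁ t₂ =>
    .equal (t₁.relabel (Sum.map id Fin.succ)) (t₂.relabel (Sum.map id Fin.succ))
  | _, .rel r ts => .rel r fun i => (ts i).relabel (Sum.map id Fin.succ)
  | _, .imp φ ψ => (relativize φ).imp (relativize ψ)
  | n, .all φ => ∀' (coAdj 0 (Fin.last (n + 1)) ⟹ relativize φ)

theorem qdepth_relativize (φ : Language.graph.BoundedFormula α n) :
    (relativize φ).qdepth = φ.qdepth := by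
  induction φ with
  | falsum | equal | rel => rfl
  | imp φ ψ ihφ ihψ => simp only [relativize, BoundedFormula.qdepth, ihφ, ihψ]
  | all φ ih =>
    simp only [relativize, BoundedFormula.qdepth, ih, qdepth_coAdj, Nat.zero_max]

theorem realize_relativize {V : Type*} (G : SimpleGraph V) (v : V)
    (φ : Language.graph.BoundedFormula α n) (u : α → Gᶜ.neighborSet v)
    (xs : Fin n → Gᶜ.neighborSet v) :
    (letI := G.structure; (relativize φ).Realize (Subtype.val ∘ u)
        (Fin.cons v (Subtype.val ∘ xs) : Fin (n + 1) → V)) ↔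
      (letI := (G.induce (Gᶜ.neighborSet v)).structure; φ.Realize u xs) := by
  let := G.structure
  let := (G.induce (Gᶜ.neighborSet v)).structure
  have realize_relabel {k : ℕ} (xs : Fin k → Gᶜ.neighborSet v)
      (t : Language.graph.Term (α ⊕ Fin k)) :
      (t.relabel (Sum.map id Fin.succ)).realize
          (Sum.elim (Subtype.val ∘ u) (Fin.cons v (Subtype.val ∘ xs) : Fin (k + 1) → V)) =
        (t.realize (Sum.elim u xs)).1 := by
    cases t with
    | var x => cases x <;> rfl
    | func f => exact isEmptyElim f
  induction φ with
  | falsum => exact Iff.rfl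
  | equal t₁ t₂ =>
    simp only [relativize, BoundedFormula.Realize, realize_relabel, Subtype.ext_iff]
  | rel r ts =>
    cases r
    simp only [relativize, BoundedFormula.Realize, realize_relabel]
    rfl
  | imp φ ψ ihφ ihψ => exact imp_congr (ihφ xs) (ihψ xs)
  | all φ ih =>
    simp only [relativize, BoundedFormula.realize_all, BoundedFormula.realize_imp, realize_coAdj,
      ← Fin.cons_snoc_eq_snoc_cons, Fin.cons_zero, ← Fin.succ_last, Fin.cons_succ, Fin.snoc_last,
      ← ih, Fin.comp_snoc, Subtype.forall, mem_neighborSet]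

end Relativization

theorem nonempty_sum_bot_embedding_iff {α V ι : Type*} [Unique ι] {F : SimpleGraph α}
    {G : SimpleGraph V} :
    Nonempty (F ⊕g (⊥ : SimpleGraph ι) ↪g G) ↔
      ∃ v, Nonempty (F ↪g G.induce (Gᶜ.neighborSet v)) := by
  constructor
  · rintro ⟨f⟩
    have hmem (a : α) : f (.inl a) ∈ Gᶜ.neighborSet (f (.inr default)) := by
      rw [mem_neighborSet, compl_adj, f.map_adj_iff, f.injective.ne_iff]
      simp
    exact ⟨f (.inr default), ⟨⟨fun a => ⟨f (.inl a), hmem a⟩,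
      fun a b hab => Sum.inl_injective (f.injective (Subtype.ext_iff.1 hab))⟩,
      (f.map_adj_iff (v := .inl _) (w := .inl _)).trans sum_adj_inl⟩⟩
  · rintro ⟨v, ⟨f⟩⟩
    have hne (a : α) : v ≠ f a := (compl_adj _ _ _ |>.1 (f a).2).1
    have hadj (a : α) : ¬G.Adj v (f a) := (compl_adj _ _ _ |>.1 (f a).2).2
    refine ⟨⟨⟨Sum.elim (fun a => (f a : V)) fun _ => v, ?_⟩, ?_⟩⟩
    · exact (Subtype.val_injective.comp f.injective).sumElim
        (Function.injective_of_subsingleton _) fun a _ => (hne a).symm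
    · rintro (a | i) (b | j)
      · exact f.map_adj_iff.trans sum_adj_inl.symm
      · simpa [adj_comm] using hadj a
      · simpa using hadj b
      · simp

theorem _root_.Expresses.congr {α β : Type} {φ : Language.graph.Sentence} {F : SimpleGraph α}
    {H : SimpleGraph β} (h : Expresses φ F) (e : F ≃g H) : Expresses φ H :=
  fun V hV G => (h V hV G).trans
    ⟨fun ⟨f⟩ => ⟨e.symm.toEmbedding.trans f⟩, fun ⟨f⟩ => ⟨e.toEmbedding.trans f⟩⟩

theorem _root_.Expresses.sum_bot {α ι : Type} [Unique ι] {φ : Language.graph.Sentence}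
    {F : SimpleGraph α} (h : Expresses φ F) :
    Expresses (∃' (relativize φ)) (F ⊕g (⊥ : SimpleGraph ι)) := by
  intro V _ G
  let := G.structure
  rw [nonempty_sum_bot_embedding_iff]
  refine BoundedFormula.realize_ex.trans (exists_congr fun v => ?_)
  let := (G.induce (Gᶜ.neighborSet v)).structure
  rw [← h _ (Fintype.ofFinite _), Sentence.Realize, Formula.Realize, ← realize_relativize]
  exact iff_of_eq (congr_arg₂ _ (Subsingleton.elim _ _) (funext (Fin.forall_fin_one.2 rfl)))

/-! ### The case of a single isolated vertex -/

section CoPaw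

variable {V : Type*} {G : SimpleGraph V}

/-- A graph is locally complete multipartite if all its vertex neighbourhoods induce complete
multipartite graphs. These are the graphs without induced paw, the paw being the complement of
`P₃ ⊔ K₁`. -/
def LocallyCompleteMultipartite (G : SimpleGraph V) : Prop :=
  ∀ v, (G.induce (G.neighborSet v)).IsCompleteMultipartite

theorem LocallyCompleteMultipartite.adj_or_adj (hG : LocallyCompleteMultipartite G) {v a b c : V}
    (ha : G.Adj v a) (hb : G.Adj v b) (hc : G.Adj v c) (hac : G.Adj a c) :
    G.Adj a b ∨ G.Adj b c := by
  by_contra! h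
  exact (hG v).trans ⟨a, ha⟩ ⟨b, hb⟩ ⟨c, hc⟩ h.1 h.2 hac

theorem nonempty_pathGraph_three_sum_bot_embedding_iff {ι : Type*} [Unique ι] :
    Nonempty (pathGraph 3 ⊕g (⊥ : SimpleGraph ι) ↪g G) ↔ ¬LocallyCompleteMultipartite Gᶜ := by
  have compl_induce (s : Set V) : (G.induce s)ᶜ = Gᶜ.induce s := by
    ext
    simp [Subtype.ext_iff]
  rw [nonempty_sum_bot_embedding_iff, LocallyCompleteMultipartite, not_forall]
  refine exists_congr fun v => ?_
  rw [← compl_induce, Embedding.complEquiv.nonempty_congr]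
  exact ⟨fun ⟨f⟩ => not_isCompleteMultipartite_of_pathGraph3ComplEmbedding f,
    fun h => ⟨pathGraph3ComplEmbeddingOf h⟩⟩

/-- The triangle `x p q` gives the multipartite neighbourhood of `x` an edge, so every edge at `x`
lies in a triangle; a non-neighbour of `x` adjacent to one vertex of such a triangle is adjacent to
the other. -/
theorem LocallyCompleteMultipartite.adj_of_adj (hG : LocallyCompleteMultipartite G)
    {p q x y z w : V} (hxp : G.Adj x p) (hxq : G.Adj x q) (hpq : G.Adj p q) (hxy : ¬G.Adj x y)
    (hxz : G.Adj x z) (hyz : G.Adj y z) (hxw : G.Adj x w) : G.Adj y w := by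
  have adj_of_triangle {z r : V} (hxz : G.Adj x z) (hyz : G.Adj y z) (hxr : G.Adj x r)
      (hzr : G.Adj z r) : G.Adj y r :=
    (hG.adj_or_adj hxz.symm hyz.symm hzr hxr).resolve_left hxy
  obtain ⟨r, hxr, hzr⟩ : ∃ r, G.Adj x r ∧ G.Adj z r := by
    rcases hG.adj_or_adj hxp hxz hxq hpq with hpz | hzq
    exacts [⟨p, hxp, hpz.symm⟩, ⟨q, hxq, hzq⟩]
  rcases hG.adj_or_adj hxz hxw hxr hzr with hzw | hwr
  · exact adj_of_triangle hxz hyz hxw hzw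
  · exact adj_of_triangle hxr (adj_of_triangle hxz hyz hxr hzr) hxw hwr.symm

theorem not_locallyCompleteMultipartite_iff :
    ¬LocallyCompleteMultipartite G ↔
      ∃ x, (∃ p, G.Adj x p ∧ ∃ q, G.Adj x q ∧ G.Adj p q) ∧
        ∃ y, ¬G.Adj x y ∧ (∃ z, G.Adj x z ∧ G.Adj y z) ∧ ∃ w, G.Adj x w ∧ ¬G.Adj y w := by
  constructor
  · intro h
    obtain ⟨v, hv⟩ := not_forall.1 h
    obtain ⟨⟨y, hy⟩, ⟨x, hx⟩, ⟨w, hw⟩, hxw, hyx, hyw⟩ :=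
      exists_isPathGraph3Compl_of_not_isCompleteMultipartite hv
    exact ⟨x, ⟨v, hx.symm, w, hxw, hw⟩, y, fun h => hyx h.symm, ⟨v, hx.symm, hy.symm⟩, w, hxw, hyw⟩
  · rintro ⟨x, ⟨p, hxp, q, hxq, hpq⟩, y, hxy, ⟨z, hxz, hyz⟩, w, hxw, hyw⟩ hG
    exact hyw (hG.adj_of_adj hxp hxq hpq hxy hxz hyz hxw)

/-- The sentence saying that the complement is not locally complete multipartite, in the form of
`not_locallyCompleteMultipartite_iff`. It has depth 3 because, below `x`, the pairs
`p, q` and `y, z` and `y, w` lie on different branches. -/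
def coPawSentence : Language.graph.Sentence :=
  ∃' ((∃' (coAdj 0 1 ⊓ ∃' (coAdj 0 2 ⊓ coAdj 1 2))) ⊓
    ∃' (∼(coAdj 0 1) ⊓ ((∃' (coAdj 0 2 ⊓ coAdj 1 2)) ⊓ ∃' (coAdj 0 2 ⊓ ∼(coAdj 1 2)))))

theorem expresses_coPawSentence :
    Expresses coPawSentence (pathGraph 3 ⊕g (⊥ : SimpleGraph (Fin 1))) := by
  intro V _ G
  let := G.structure
  rw [nonempty_pathGraph_three_sum_bot_embedding_iff, not_locallyCompleteMultipartite_iff]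
  simp only [coPawSentence, Sentence.Realize, Formula.Realize, BoundedFormula.realize_ex,
    BoundedFormula.realize_inf, BoundedFormula.realize_not, realize_coAdj]
  rfl

end CoPaw

theorem exists_expresses_pathGraph_three_sum_bot (k : ℕ) :
    ∃ φ : Language.graph.Sentence, φ.qdepth = k + 3 ∧
      Expresses φ (pathGraph 3 ⊕g (⊥ : SimpleGraph (Fin (k + 1)))) := by
  induction k with
  | zero => exact ⟨coPawSentence, rfl, expresses_coPawSentence⟩
  | succ k ih =>
    obtain ⟨φ, hφ, h⟩ := ih
    have botSumBot : (⊥ : SimpleGraph (Fin (k + 1))) ⊕g (⊥ : SimpleGraph (Fin 1)) ≃g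
        (⊥ : SimpleGraph (Fin (k + 1 + 1))) := by
      rw [bot_sum_bot]
      exact ⟨finSumFinEquiv, Iff.rfl⟩
    refine ⟨∃' (relativize φ), ?_,
      h.sum_bot.congr (Iso.sumAssoc.trans (Iso.refl.sumCongr botSumBot))⟩
    simp [BoundedFormula.qdepth, qdepth_relativize, hφ]

end InducedSubgraphDepth

/-- for `F = P₃ ⊔ mK₁` (with `m ≥ 1`), `D[F] = m + 2 = v(F) − 1`:
some sentence of quantifier depth at most `m + 2` expresses `C[F]`, and no sentence
of quantifier depth at most `m + 1` expresses `C[F]`. -/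
theorem depth_path3_union_empty (m : ℕ) (hm : 0 < m) :
    (∃ φ : Language.graph.Sentence, φ.qdepth ≤ m + 2 ∧
        Expresses φ (SimpleGraph.pathGraph 3 ⊕g (⊥ : SimpleGraph (Fin m)))) ∧
    (∀ φ : Language.graph.Sentence, φ.qdepth ≤ m + 1 →
        ¬Expresses φ (SimpleGraph.pathGraph 3 ⊕g (⊥ : SimpleGraph (Fin m)))) := by
  obtain ⟨k, rfl⟩ := Nat.exists_eq_succ_of_ne_zero hm.ne'
  obtain ⟨φ, hφ, h⟩ := InducedSubgraphDepth.exists_expresses_pathGraph_three_sum_bot k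
  exact ⟨⟨φ, hφ.le, h⟩, InducedSubgraphDepth.not_expresses_pathGraph_three_sum_bot _⟩
end

section
/- For every finite simple graph F on exactly 5 vertices, D[F] ≥ 4; that is, no first-order sentence in the language of graphs of quantifier depth at most 3 expresses the property C[F] of containing an induced subgraph isomorphic to F. -/
open FirstOrder

/-!
A `k`-existentially closed graph realizes every pattern of adjacencies to at most `k` given
vertices, so Duplicator wins the Ehrenfeucht–Fraïssé game with `k + 1` rounds on any two such
graphs, and they satisfy the same sentences of quantifier depth at most `k + 1`. It therefore
suffices to find, for each five-vertex `F`, a 2-existentially closed graph containing `F` and one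
omitting it.

Every finite graph lies in a finite 2-existentially closed graph: in the symmetric difference
product of two such graphs, one fibre can be overwritten at will.

No five-vertex graph lies in all of the 3 × 3 rook's graph, the circulant graph on `ℤ/13` with
jumps `±1, ±2, ±4`, and the lexicographic product `C₅[C₅]`. The five-vertex induced subgraphs of
the rook's graph are the path, the house, the bull, the butterfly and the complement `C₄ + K₁` of
the butterfly. The last two do not occur in the circulant graph. The first three have no proper
homogeneous set with at least two vertices, so from `C₅[C₅]` they would embed in `C₅`.
-/

section ExistentialClosure

variable {V W : Type*} {G : SimpleGraph V} {H : SimpleGraph W} {k n : ℕ}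

/-- `G` is `k`-existentially closed: every prescription of adjacencies to at most `k` given
vertices is met by a further vertex. The prescription is a predicate `p`, of which only the values
on `s` matter. -/
def IsExistentiallyClosed (k : ℕ) (G : SimpleGraph V) : Prop :=
  ∀ s : Finset V, s.card ≤ k → ∀ p : V → Prop, ∃ z ∉ s, ∀ a ∈ s, G.Adj a z ↔ p a

theorem IsExistentiallyClosed.exists_adj_iff (hG : IsExistentiallyClosed 2 G) {a b : V}
    (hab : a ≠ b) (p q : Prop) :
    ∃ z, z ≠ a ∧ z ≠ b ∧ (G.Adj a z ↔ p) ∧ (G.Adj b z ↔ q) := by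
  classical
  obtain ⟨z, hz, h⟩ := hG {a, b} Finset.card_le_two fun v => if v = a then p else q
  simp only [Finset.mem_insert, Finset.mem_singleton, not_or] at hz
  exact ⟨z, hz.1, hz.2, by simpa using h a (by simp), by simpa [hab.symm] using h b (by simp)⟩

theorem exists_ne_subset_pair_of_card_le_two [DecidableEq V] [Nontrivial V] {s : Finset V}
    (hs : s.card ≤ 2) : ∃ a b, a ≠ b ∧ s ⊆ {a, b} := by
  obtain h | h | h : s.card = 0 ∨ s.card = 1 ∨ s.card = 2 := by omega
  · obtain ⟨a, b, hab⟩ := exists_pair_ne V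
    exact ⟨a, b, hab, by simp [Finset.card_eq_zero.1 h]⟩
  · obtain ⟨a, rfl⟩ := Finset.card_eq_one.1 h
    obtain ⟨b, hb⟩ := exists_ne a
    exact ⟨a, b, hb.symm, by simp⟩
  · obtain ⟨a, b, hab, rfl⟩ := Finset.card_eq_two.1 h
    exact ⟨a, b, hab, subset_rfl⟩

-- The patterns are Booleans so that the hypothesis is decidable for a concrete finite graph.
theorem isExistentiallyClosed_two_of_pairs [Nontrivial V]
    (h : ∀ a b, a ≠ b → ∀ p q : Bool,
      ∃ z, z ≠ a ∧ z ≠ b ∧ (G.Adj a z ↔ p = true) ∧ (G.Adj b z ↔ q = true)) :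
    IsExistentiallyClosed 2 G := by
  classical
  intro s hs p
  obtain ⟨a, b, hab, hsub⟩ := exists_ne_subset_pair_of_card_le_two hs
  obtain ⟨z, hza, hzb, ha, hb⟩ := h a b hab (decide (p a)) (decide (p b))
  have hmem : ∀ v ∈ s, v = a ∨ v = b := fun v hv => by simpa using hsub hv
  refine ⟨z, fun hz => (hmem z hz).elim hza hzb, fun v hv => ?_⟩
  rcases hmem v hv with rfl | rfl
  · simpa using ha
  · simpa using hb

/-- `x i ↦ y i` is a well-defined isomorphism between the subgraphs induced by the two tuples. -/
def IsPartialIso {ι : Type*} (G : SimpleGraph V) (H : SimpleGraph W) (x : ι → V) (y : ι → W) :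
    Prop :=
  ∀ i j, (x i = x j ↔ y i = y j) ∧ (G.Adj (x i) (x j) ↔ H.Adj (y i) (y j))

theorem IsPartialIso.symm {ι : Type*} {x : ι → V} {y : ι → W} (h : IsPartialIso G H x y) :
    IsPartialIso H G y x :=
  fun i j => ⟨(h i j).1.symm, (h i j).2.symm⟩

theorem IsPartialIso.snoc {x : Fin n → V} {y : Fin n → W} (h : IsPartialIso G H x y) {a : V}
    {b : W} (hab : ∀ i, (x i = a ↔ y i = b) ∧ (G.Adj (x i) a ↔ H.Adj (y i) b)) :
    IsPartialIso G H (Fin.snoc (α := fun _ => V) x a) (Fin.snoc (α := fun _ => W) y b) := by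
  intro i j
  induction i using Fin.lastCases with
  | last =>
    induction j using Fin.lastCases with
    | last => simp
    | cast j =>
      simp only [Fin.snoc_last, Fin.snoc_castSucc]
      rw [eq_comm, @eq_comm _ b, G.adj_comm, H.adj_comm]
      exact hab j
  | cast i =>
    induction j using Fin.lastCases with
    | last => simpa using hab i
    | cast j => simpa using h i j

theorem IsPartialIso.exists_snoc (hH : IsExistentiallyClosed k H) (hn : n ≤ k) {x : Fin n → V}
    {y : Fin n → W} (h : IsPartialIso G H x y) (a : V) :
    ∃ b : W,
      IsPartialIso G H (Fin.snoc (α := fun _ => V) x a) (Fin.snoc (α := fun _ => W) y b) := by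
  classical
  by_cases hx : ∃ i, x i = a
  · obtain ⟨i, rfl⟩ := hx
    exact ⟨y i, h.snoc fun j => h j i⟩
  · push Not at hx
    have hcard : (Finset.univ.image y).card ≤ k :=
      Finset.card_image_le.trans (by simpa using hn)
    obtain ⟨b, hb, hadj⟩ := hH _ hcard fun w => ∃ j, y j = w ∧ G.Adj (x j) a
    have hne : ∀ i, y i ≠ b := by simpa using hb
    have hpattern : ∀ i, H.Adj (y i) b ↔ G.Adj (x i) a := fun i => by
      rw [hadj (y i) (by simp)]
      exact ⟨fun ⟨j, hj, hja⟩ => (h j i).1.2 hj ▸ hja, fun hi => ⟨i, rfl, hi⟩⟩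
    exact ⟨b, h.snoc fun i => ⟨iff_of_false (hx i) (hne i), (hpattern i).symm⟩⟩

theorem exists_eq_var_of_graph_term (t : Language.graph.Term (Empty ⊕ Fin n)) :
    ∃ i, t = Language.Term.var (Sum.inr i) := by
  cases t with
  | var v =>
    rcases v with v | i
    · exact v.elim
    · exact ⟨i, rfl⟩
  | func f _ => exact isEmptyElim f

-- Duplicator's strategy in the Ehrenfeucht–Fraïssé game with `k + 1` rounds: at each of her moves
-- at most `k` vertices of either graph have been chosen, so existential closure supplies a reply.
theorem IsPartialIso.realize_iff (hG : IsExistentiallyClosed k G) (hH : IsExistentiallyClosed k H)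
    (φ : Language.graph.BoundedFormula Empty n) (hφ : n + φ.qdepth ≤ k + 1) {x : Fin n → V}
    {y : Fin n → W} (hxy : IsPartialIso G H x y) (u : Empty → V) (v : Empty → W) :
    (letI := G.structure; φ.Realize u x) ↔ (letI := H.structure; φ.Realize v y) := by
  let := G.structure
  let := H.structure
  induction φ with
  | falsum => exact Iff.rfl
  | equal t₁ t₂ =>
    obtain ⟨i, rfl⟩ := exists_eq_var_of_graph_term t₁
    obtain ⟨j, rfl⟩ := exists_eq_var_of_graph_term t₂
    exact (hxy i j).1
  | rel R ts =>
    cases R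
    obtain ⟨i, hi⟩ := exists_eq_var_of_graph_term (ts 0)
    obtain ⟨j, hj⟩ := exists_eq_var_of_graph_term (ts 1)
    change G.Adj ((ts 0).realize _) ((ts 1).realize _) ↔
      H.Adj ((ts 0).realize _) ((ts 1).realize _)
    rw [hi, hj]
    exact (hxy i j).2
  | imp f g ihf ihg =>
    simp only [Language.BoundedFormula.qdepth] at hφ
    exact imp_congr (ihf (by omega) hxy) (ihg (by omega) hxy)
  | all f ih =>
    simp only [Language.BoundedFormula.qdepth] at hφ
    constructor
    · intro hf b
      obtain ⟨a, hba⟩ := hxy.symm.exists_snoc hG (by omega) b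
      exact (ih (by omega) hba.symm).1 (hf a)
    · intro hf a
      obtain ⟨b, hab⟩ := hxy.exists_snoc hH (by omega) a
      exact (ih (by omega) hab).2 (hf b)

theorem IsExistentiallyClosed.realize_sentence_iff (hG : IsExistentiallyClosed k G)
    (hH : IsExistentiallyClosed k H) (φ : Language.graph.Sentence) (hφ : φ.qdepth ≤ k + 1) :
    (letI := G.structure; φ.Realize V) ↔ (letI := H.structure; φ.Realize W) :=
  IsPartialIso.realize_iff hG hH φ (by omega) (fun i => i.elim0) _ _

end ExistentialClosure

section Overlay

variable {α β : Type*}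

/-- The symmetric difference product of `P` and `Q` (two pairs are adjacent when exactly one of
their coordinates is an edge), with the graph on the fibre over `a₀` replaced by `F`. -/
def overlayProd (P : SimpleGraph α) (Q : SimpleGraph β) (a₀ : α) (F : SimpleGraph β) :
    SimpleGraph (α × β) where
  Adj x y := (x.1 = a₀ ∧ y.1 = a₀ ∧ F.Adj x.2 y.2) ∨
    (¬(x.1 = a₀ ∧ y.1 = a₀) ∧ (P.Adj x.1 y.1 ↔ ¬Q.Adj x.2 y.2))
  symm := ⟨fun x y => by
    simp only [P.adj_comm x.1, Q.adj_comm x.2, F.adj_comm x.2]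
    tauto⟩
  loopless := ⟨fun x => by simp⟩

variable {P : SimpleGraph α} {Q : SimpleGraph β} {a₀ : α} (F : SimpleGraph β)

theorem overlayProd_adj_of_ne {x y : α × β} (h : y.1 = a₀ → x.1 ≠ a₀) :
    (overlayProd P Q a₀ F).Adj x y ↔ (P.Adj x.1 y.1 ↔ ¬Q.Adj x.2 y.2) := by
  change (_ ∨ _) ↔ _
  tauto

/-- `F` as the fibre of `overlayProd` over `a₀`. -/
def overlayProdEmbedding : F ↪g overlayProd P Q a₀ F where
  toFun b := (a₀, b)
  inj' := Prod.mk_right_injective a₀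
  map_rel_iff' := by simp [overlayProd]

-- A witness outside the special fibre is needed only where the two given vertices differ in the
-- second coordinate. Otherwise the witness differs from both of them in the first coordinate.
theorem isExistentiallyClosed_overlayProd [Nontrivial α] (hP : IsExistentiallyClosed 2 P)
    (hQ : IsExistentiallyClosed 2 Q) : IsExistentiallyClosed 2 (overlayProd P Q a₀ F) := by
  have : Nonempty β := let ⟨b, _⟩ := hQ ∅ (by simp) fun _ => True; ⟨b⟩
  refine isExistentiallyClosed_two_of_pairs fun x y hxy p q => ?_
  by_cases h2 : x.2 = y.2
  · have h1 : x.1 ≠ y.1 := fun h1 => hxy (Prod.ext h1 h2)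
    obtain ⟨a, hax, hay, hx, hy⟩ := hP.exists_adj_iff h1 p q
    refine ⟨(a, x.2), ne_of_apply_ne Prod.fst hax, ne_of_apply_ne Prod.fst hay, ?_, ?_⟩
    · rw [overlayProd_adj_of_ne F (by rintro rfl; exact hax.symm)]
      simpa using hx
    · rw [overlayProd_adj_of_ne F (by rintro rfl; exact hay.symm)]
      simpa [h2] using hy
  · obtain ⟨a, ha⟩ := exists_ne a₀
    obtain ⟨b, hbx, hby, hx, hy⟩ :=
      hQ.exists_adj_iff h2 (P.Adj x.1 a ↔ ¬p = true) (P.Adj y.1 a ↔ ¬q = true)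
    refine ⟨(a, b), ne_of_apply_ne Prod.snd hbx, ne_of_apply_ne Prod.snd hby, ?_, ?_⟩
    · rw [overlayProd_adj_of_ne F fun h => absurd h ha, hx]
      tauto
    · rw [overlayProd_adj_of_ne F fun h => absurd h ha, hy]
      tauto

end Overlay

section Containing

open SimpleGraph

instance {α β : Type*} [DecidableEq α] [DecidableEq β] (G : SimpleGraph α) (H : SimpleGraph β)
    [DecidableRel G.Adj] [DecidableRel H.Adj] : DecidableRel (G □ H).Adj :=
  fun _ _ => decidable_of_iff' _ boxProd_adj

/-- The 3 × 3 rook's graph, which is also the Paley graph on nine vertices. -/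
abbrev rookGraph : SimpleGraph (Fin 3 × Fin 3) :=
  (⊤ : SimpleGraph (Fin 3)) □ (⊤ : SimpleGraph (Fin 3))

theorem isExistentiallyClosed_rookGraph : IsExistentiallyClosed 2 rookGraph :=
  isExistentiallyClosed_two_of_pairs (by decide +kernel)

theorem exists_isExistentiallyClosed_two_card_gt (n : ℕ) :
    ∃ (β : Type) (_ : Fintype β) (Q : SimpleGraph β),
      IsExistentiallyClosed 2 Q ∧ n < Fintype.card β := by
  induction n with
  | zero => exact ⟨_, inferInstance, _, isExistentiallyClosed_rookGraph, by simp⟩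
  | succ n ih =>
    obtain ⟨β, _, Q, hQ, hcard⟩ := ih
    refine ⟨_, inferInstance, overlayProd rookGraph Q (0, 0) ⊥,
      isExistentiallyClosed_overlayProd _ isExistentiallyClosed_rookGraph hQ, ?_⟩
    simp only [Fintype.card_prod, Fintype.card_fin]
    omega

theorem exists_isExistentiallyClosed_two_isIndContained {V : Type*} [Finite V]
    (F : SimpleGraph V) :
    ∃ (β : Type) (_ : Fintype β) (G : SimpleGraph β), IsExistentiallyClosed 2 G ∧ F ⊴ G := by
  have := Fintype.ofFinite V
  obtain ⟨β, _, Q, hQ, hcard⟩ := exists_isExistentiallyClosed_two_card_gt (Fintype.card V)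
  obtain ⟨e⟩ := Function.Embedding.nonempty_of_card_le hcard.le
  exact ⟨_, inferInstance, overlayProd rookGraph Q (0, 0) (F.map e),
    isExistentiallyClosed_overlayProd _ isExistentiallyClosed_rookGraph hQ,
    ⟨(overlayProdEmbedding (F.map e)).comp (Embedding.map e F)⟩⟩

end Containing

section Omitting

open SimpleGraph

variable {V W α β : Type*} {F : SimpleGraph V}

/-- `G` has the butterfly (two triangles `v a b` and `v c d` sharing the vertex `v`) as an induced
subgraph. For `Gᶜ` in place of `G` this says that `G` has an induced `C₄ + K₁`. The quantifiers are
interleaved with the conditions to keep exhaustive search short. -/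
def HasInducedButterfly (G : SimpleGraph V) : Prop :=
  ∃ v a, G.Adj v a ∧ ∃ b, G.Adj v b ∧ G.Adj a b ∧
    ∃ c, G.Adj v c ∧ ¬G.Adj a c ∧ ¬G.Adj b c ∧
      ∃ d, G.Adj v d ∧ ¬G.Adj a d ∧ ¬G.Adj b d ∧ G.Adj c d

instance [Fintype V] (G : SimpleGraph V) [DecidableRel G.Adj] :
    Decidable (HasInducedButterfly G) := by
  unfold HasInducedButterfly
  infer_instance

theorem HasInducedButterfly.mono {G : SimpleGraph V} {H : SimpleGraph W}
    (h : HasInducedButterfly G) (hGH : G ⊴ H) : HasInducedButterfly H := by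
  obtain ⟨f⟩ := hGH
  obtain ⟨v, a, hva, b, hvb, hab, c, hvc, hac, hbc, d, hd⟩ := h
  simp only [← f.map_adj_iff] at *
  exact ⟨f v, f a, hva, f b, hvb, hab, f c, hvc, hac, hbc, f d, hd⟩

/-- `G` is prime (for modular decomposition): a set of vertices that no outside vertex
distinguishes has at most one element or is everything. -/
def IsPrimeGraph (G : SimpleGraph V) : Prop :=
  ∀ s : Set V, (∀ x ∉ s, ∀ y ∈ s, ∀ z ∈ s, G.Adj x y ↔ G.Adj x z) → s.Subsingleton ∨ s = Set.univ

theorem isPrimeGraph_iff_finset [Fintype V] (G : SimpleGraph V) :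
    IsPrimeGraph G ↔ ∀ s : Finset V, (∀ x ∉ s, ∀ y ∈ s, ∀ z ∈ s, G.Adj x y ↔ G.Adj x z) →
      s.card ≤ 1 ∨ s = Finset.univ := by
  classical
  simp only [Finset.card_le_one_iff_subsingleton, ← Finset.coe_eq_univ, ← Finset.mem_coe]
  exact ⟨fun h s => h s, fun h s => by simpa using h s.toFinset⟩

instance [Fintype V] [DecidableEq V] (G : SimpleGraph V) [DecidableRel G.Adj] :
    Decidable (IsPrimeGraph G) :=
  decidable_of_iff' _ (isPrimeGraph_iff_finset G)

/-- The lexicographic product `G[H]`: each vertex of `G` is replaced by a copy of `H`. -/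
def lexProd (G : SimpleGraph α) (H : SimpleGraph β) : SimpleGraph (α × β) where
  Adj x y := G.Adj x.1 y.1 ∨ x.1 = y.1 ∧ H.Adj x.2 y.2
  symm := ⟨fun x y => by rw [G.adj_comm, H.adj_comm, @eq_comm _ x.1]; exact id⟩
  loopless := ⟨fun x => by simp⟩

instance [DecidableEq α] (G : SimpleGraph α) (H : SimpleGraph β) [DecidableRel G.Adj]
    [DecidableRel H.Adj] : DecidableRel (lexProd G H).Adj :=
  fun _ _ => inferInstanceAs (Decidable (_ ∨ _))

-- The fibres of the first coordinate are homogeneous in `F`, so it is injective or constant.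
theorem IsPrimeGraph.isIndContained_of_lexProd {G : SimpleGraph α} {H : SimpleGraph β}
    (hF : IsPrimeGraph F) (h : F ⊴ lexProd G H) : F ⊴ G ∨ F ⊴ H := by
  obtain ⟨f⟩ := h
  have hadj : ∀ x y, F.Adj x y ↔
      G.Adj (f x).1 (f y).1 ∨ (f x).1 = (f y).1 ∧ H.Adj (f x).2 (f y).2 :=
    fun x y => f.map_adj_iff.symm
  by_cases hinj : Function.Injective fun x => (f x).1
  · refine .inl ⟨⟨⟨_, hinj⟩, fun {x y} => ?_⟩⟩
    refine (hadj x y).trans (or_iff_left fun ⟨hxy, hH⟩ => ?_) |>.symm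
    exact H.ne_of_adj hH (by rw [hinj hxy])
  · obtain ⟨x, y, hxy, hne⟩ := Function.not_injective_iff.1 hinj
    have hfibre := hF {z | (f z).1 = (f x).1} fun u hu v hv w hw => by
      have hv' : (f v).1 = (f x).1 := hv
      have hw' : (f w).1 = (f x).1 := hw
      have hu' : (f u).1 ≠ (f x).1 := hu
      simp [hadj, hv', hw', hu']
    have hconst : ∀ z, (f z).1 = (f x).1 :=
      Set.eq_univ_iff_forall.1 (hfibre.resolve_left fun h => hne (h rfl hxy.symm))
    have hsnd : Function.Injective fun z => (f z).2 := fun z w hzw =>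
      f.injective (Prod.ext ((hconst z).trans (hconst w).symm) hzw)
    exact .inr ⟨⟨⟨_, hsnd⟩, fun {z w} => by simp [hadj, hconst]⟩⟩

theorem isIndContained_of_card_eq [Fintype V] [Fintype W] {G : SimpleGraph W} (h : F ⊴ G)
    (hcard : Fintype.card V = Fintype.card W) : G ⊴ F := by
  obtain ⟨f⟩ := h
  have hbij := (Fintype.bijective_iff_injective_and_card f).2 ⟨f.injective, hcard⟩
  exact Iso.isIndContained' (RelIso.ofSurjective f hbij.surjective)

theorem isExistentiallyClosed_lexProd_cycleGraph_five :
    IsExistentiallyClosed 2 (lexProd (cycleGraph 5) (cycleGraph 5)) :=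
  isExistentiallyClosed_two_of_pairs (by decide +kernel)

/-- The circulant graph on `ℤ/13` with jumps `±1, ±2, ±4`. -/
abbrev circulantThirteen : SimpleGraph (Fin 13) :=
  circulantGraph {1, 2, 4}

theorem isExistentiallyClosed_circulantThirteen : IsExistentiallyClosed 2 circulantThirteen :=
  isExistentiallyClosed_two_of_pairs (by decide +kernel)

theorem not_hasInducedButterfly_circulantThirteen : ¬HasInducedButterfly circulantThirteen := by
  decide +kernel

theorem not_hasInducedButterfly_circulantThirteen_compl :
    ¬HasInducedButterfly circulantThirteenᶜ := by
  decide +kernel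

-- Two consecutive edges of an induced cycle cannot lie on one line, so the edges along rows and
-- along columns alternate, which is impossible on an odd cycle.
theorem not_cycleGraph_five_isIndContained_boxProd_top :
    ¬cycleGraph 5 ⊴ (⊤ : SimpleGraph α) □ (⊤ : SimpleGraph β) := by
  rintro ⟨f⟩
  have hedge : ∀ i, (f i).1 = (f (i + 1)).1 ∨ (f i).2 = (f (i + 1)).2 := fun i => by
    have h := f.map_adj_iff.2 (show (cycleGraph 5).Adj i (i + 1) by revert i; decide)
    rw [boxProd_adj] at h
    tauto
  have hdiag : ∀ i, (f i).1 ≠ (f (i + 1 + 1)).1 ∧ (f i).2 ≠ (f (i + 1 + 1)).2 := fun i => by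
    have hadj := mt f.map_adj_iff.1 (show ¬(cycleGraph 5).Adj i (i + 1 + 1) by revert i; decide)
    have hne := f.injective.ne ((show ∀ j : Fin 5, j ≠ j + 1 + 1 by decide) i)
    simp only [boxProd_adj, top_adj, ne_eq, Prod.ext_iff] at hadj hne ⊢
    tauto
  have halternate : ∀ i, (f i).1 = (f (i + 1)).1 ↔ ¬(f (i + 1)).1 = (f (i + 1 + 1)).1 := by
    grind
  have h0 := halternate 0
  have h1 := halternate 1
  have h2 := halternate 2
  have h3 := halternate 3
  have h4 := halternate 4
  simp only [Fin.isValue, Fin.reduceAdd] at h0 h1 h2 h3 h4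
  tauto

theorem isPrimeGraph_or_hasInducedButterfly_of_rookGraph_induce :
    ∀ s : Finset (Fin 3 × Fin 3), s.card = 5 →
      IsPrimeGraph (rookGraph.induce (s : Set (Fin 3 × Fin 3))) ∨
        HasInducedButterfly (rookGraph.induce (s : Set (Fin 3 × Fin 3))) ∨
        HasInducedButterfly (rookGraph.induce (s : Set (Fin 3 × Fin 3)))ᶜ := by
  decide +kernel

theorem not_isIndContained_rookGraph_circulantThirteen_lexProd [Fintype V]
    (hV : Fintype.card V = 5) (hrook : F ⊴ rookGraph) (hcirc : F ⊴ circulantThirteen) :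
    ¬F ⊴ lexProd (cycleGraph 5) (cycleGraph 5) := by
  intro hlex
  obtain ⟨s, ⟨e⟩⟩ := isIndContained_iff_exists_iso_induce.1 hrook
  lift s to Finset (Fin 3 × Fin 3) using s.toFinite
  have hs : s.card = 5 := by rw [← hV, Fintype.card_congr e.toEquiv]; simp
  have hcirc' := e.isIndContained'.trans hcirc
  rcases isPrimeGraph_or_hasInducedButterfly_of_rookGraph_induce s hs with hprime | h | h
  · have hpentagon := or_self_iff.1 <|
      hprime.isIndContained_of_lexProd (e.isIndContained'.trans hlex)
    have hF := isIndContained_of_card_eq (e.isIndContained.trans hpentagon) (by simpa using hV)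
    exact not_cycleGraph_five_isIndContained_boxProd_top (hF.trans hrook)
  · exact not_hasInducedButterfly_circulantThirteen (h.mono hcirc')
  · exact not_hasInducedButterfly_circulantThirteen_compl (h.mono hcirc'.compl)

theorem exists_isExistentiallyClosed_two_not_isIndContained [Fintype V]
    (hV : Fintype.card V = 5) (F : SimpleGraph V) :
    ∃ (β : Type) (_ : Fintype β) (H : SimpleGraph β), IsExistentiallyClosed 2 H ∧ ¬F ⊴ H := by
  by_contra! h
  exact not_isIndContained_rookGraph_circulantThirteen_lexProd hV
    (h _ inferInstance _ isExistentiallyClosed_rookGraph)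
    (h _ inferInstance _ isExistentiallyClosed_circulantThirteen)
    (h _ inferInstance _ isExistentiallyClosed_lexProd_cycleGraph_five)

end Omitting

/-- for every graph `F` on exactly 5 vertices, `D[F] ≥ 4`: no first-order
sentence of quantifier depth at most 3 expresses the property of containing an induced
subgraph isomorphic to `F`. -/
theorem no_depth_three_sentence_for_five_vertices
    (V : Type) [Fintype V] (hV : Fintype.card V = 5) (F : SimpleGraph V)
    (φ : Language.graph.Sentence) (hφ : φ.qdepth ≤ 3) :
    ¬Expresses φ F := by
  intro hexpr
  obtain ⟨β, _, G, hG, hFG⟩ := exists_isExistentiallyClosed_two_isIndContained F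
  obtain ⟨γ, _, H, hH, hFH⟩ := exists_isExistentiallyClosed_two_not_isIndContained hV F
  refine hFH ((hexpr γ inferInstance H).1 ?_)
  exact (hG.realize_sentence_iff hH φ hφ).1 ((hexpr β inferInstance G).2 hFG)
end
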